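/- arXiv:2102.11564 — 2 statements merged into one kernel-verified Lean document; each statement's English description precedes it below -/
import Mathlib

section
/- Let f be four times continuously differentiable on [x_1, x_n] with |f⁽⁴⁾(x)| ≤ L for all x, assume ĥ < 1, and suppose there exists K > 0 such that ĥ/h_j ≤ K for all 1 ≤ j ≤ n−1. Let Ḟ = (ḟ_2, …, ḟ_{n−1}) be the (unique) solution of the spline system A·Ḟ = B. Then max_{2≤i≤n−1} |ḟ_i − f'(x_i)| ≤ ((17K + K²)/16 + 1)·L·ĥ³. -/
/-- Mesh spacing `hᵢ = xᵢ₊₁ − xᵢ`. -/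
noncomputable def hstep (x : ℕ → ℝ) (i : ℕ) : ℝ := x (i + 1) - x i

/-- Divided difference `mᵢ = (f(xᵢ₊₁) − f(xᵢ))/hᵢ`. -/
noncomputable def mslope (x : ℕ → ℝ) (f : ℝ → ℝ) (i : ℕ) : ℝ :=
  (f (x (i + 1)) - f (x i)) / (x (i + 1) - x i)

/-- `λᵢ = hᵢ₊₁/(hᵢ + hᵢ₊₁)`. -/
noncomputable def lamb (x : ℕ → ℝ) (i : ℕ) : ℝ :=
  hstep x (i + 1) / (hstep x i + hstep x (i + 1))

/-- `μᵢ = hᵢ/(hᵢ + hᵢ₊₁)`. -/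
noncomputable def mub (x : ℕ → ℝ) (i : ℕ) : ℝ :=
  hstep x i / (hstep x i + hstep x (i + 1))

theorem aux_step (F F' : ℝ → ℝ) (d C : ℝ) (m : ℕ)
    (hF : ∀ t ∈ Set.Icc 0 d, HasDerivWithinAt F (F' t) (Set.Icc 0 d) t)
    (h0 : F 0 = 0) (hb : ∀ t ∈ Set.Icc 0 d, |F' t| ≤ C * t ^ m) :
    ∀ t ∈ Set.Icc 0 d, |F t| ≤ C / (m + 1) * t ^ (m + 1) := by
  have hm : (m : ℝ) + 1 ≠ 0 := by positivity
  intro t ht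
  refine image_norm_le_of_norm_deriv_right_le_deriv_boundary (f := F) (f' := F') (a := 0) (b := d)
    (B := fun t => C / (m + 1) * t ^ (m + 1)) (B' := fun t => C * t ^ m)
    (fun t ht => (hF t ht).continuousWithinAt) ?_ ?_ ?_ ?_ ht
  · intro t ht
    exact (hF t ⟨ht.1, ht.2.le⟩).mono_of_mem_nhdsWithin (Icc_mem_nhdsGE_of_mem ht)
  · simp [h0]
  · intro t
    have := ((hasDerivAt_id t).pow (m + 1)).const_mul (C / ((m : ℝ) + 1))
    refine this.congr_deriv ?_
    simp
    field_simp
  · intro t ht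
    exact hb t ⟨ht.1, ht.2.le⟩

theorem aux_taylor (f0 f1 f2 f3 f4 : ℝ → ℝ) (d L : ℝ) (hd : 0 ≤ d)
    (h0 : ∀ t ∈ Set.Icc 0 d, HasDerivWithinAt f0 (f1 t) (Set.Icc 0 d) t)
    (h1 : ∀ t ∈ Set.Icc 0 d, HasDerivWithinAt f1 (f2 t) (Set.Icc 0 d) t)
    (h2 : ∀ t ∈ Set.Icc 0 d, HasDerivWithinAt f2 (f3 t) (Set.Icc 0 d) t)
    (h3 : ∀ t ∈ Set.Icc 0 d, HasDerivWithinAt f3 (f4 t) (Set.Icc 0 d) t)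
    (hb : ∀ t ∈ Set.Icc 0 d, |f4 t| ≤ L) :
    |f1 d - f1 0 - d * f2 0 - d ^ 2 / 2 * f3 0| ≤ L / 6 * d ^ 3 ∧
    |f0 d - f0 0 - d * f1 0 - d ^ 2 / 2 * f2 0 - d ^ 3 / 6 * f3 0| ≤ L / 24 * d ^ 4 := by
  have s3 := aux_step (fun t => f3 t - f3 0) f4 d L 0
    (fun t ht => (h3 t ht).sub_const _) (by simp) (by simpa using hb)
  have s2 := aux_step (fun t => f2 t - f2 0 - t * f3 0) (fun t => f3 t - f3 0) d _ 1
    (fun t ht => by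
      have := ((h2 t ht).sub_const (f2 0)).sub (((hasDerivAt_id t).mul_const (f3 0)).hasDerivWithinAt)
      refine this.congr_deriv ?_; simp) (by simp) s3
  have s1 := aux_step (fun t => f1 t - f1 0 - t * f2 0 - t ^ 2 / 2 * f3 0)
    (fun t => f2 t - f2 0 - t * f3 0) d _ 2
    (fun t ht => by
      have := (((h1 t ht).sub_const (f1 0)).sub
        (((hasDerivAt_id t).mul_const (f2 0)).hasDerivWithinAt)).sub
        (((((hasDerivAt_id t).pow 2).div_const 2).mul_const (f3 0)).hasDerivWithinAt)
      refine this.congr_deriv ?_; simp) (by simp) s2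
  have s0 := aux_step (fun t => f0 t - f0 0 - t * f1 0 - t ^ 2 / 2 * f2 0 - t ^ 3 / 6 * f3 0)
    (fun t => f1 t - f1 0 - t * f2 0 - t ^ 2 / 2 * f3 0) d _ 3
    (fun t ht => by
      have := ((((h0 t ht).sub_const (f0 0)).sub
        (((hasDerivAt_id t).mul_const (f1 0)).hasDerivWithinAt)).sub
        (((((hasDerivAt_id t).pow 2).div_const 2).mul_const (f2 0)).hasDerivWithinAt)).sub
        (((((hasDerivAt_id t).pow 3).div_const 6).mul_const (f3 0)).hasDerivWithinAt)
      refine this.congr_deriv ?_; simp only [id]; push_cast; ring) (by simp) s1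
  have e1 := s1 d ⟨hd, le_rfl⟩
  have e0 := s0 d ⟨hd, le_rfl⟩
  constructor
  · refine e1.trans (le_of_eq ?_)
    push_cast; ring
  · refine e0.trans (le_of_eq ?_)
    push_cast; ring

theorem aux_right (f0 f1 f2 f3 f4 : ℝ → ℝ) (S : Set ℝ) (c d L s : ℝ) (hd : 0 ≤ d)
    (hs : s = 1 ∨ s = -1)
    (hS : ∀ t ∈ Set.Icc 0 d, c + s * t ∈ S)
    (h0 : ∀ t ∈ S, HasDerivWithinAt f0 (f1 t) S t)
    (h1 : ∀ t ∈ S, HasDerivWithinAt f1 (f2 t) S t)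
    (h2 : ∀ t ∈ S, HasDerivWithinAt f2 (f3 t) S t)
    (h3 : ∀ t ∈ S, HasDerivWithinAt f3 (f4 t) S t)
    (hb : ∀ t ∈ S, |f4 t| ≤ L) :
    |f1 (c + s * d) - f1 c - s * d * f2 c - d ^ 2 / 2 * f3 c| ≤ L / 6 * d ^ 3 ∧
    |f0 (c + s * d) - f0 c - s * d * f1 c - d ^ 2 / 2 * f2 c - s * d ^ 3 / 6 * f3 c|
      ≤ L / 24 * d ^ 4 := by
  have hs2 : s * s = 1 := by rcases hs with rfl | rfl <;> norm_num
  have hsa : |s| = 1 := by rcases hs with rfl | rfl <;> norm_num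
  have comp : ∀ (g g' : ℝ → ℝ) (a b : ℝ), a * s = b →
      (∀ t ∈ S, HasDerivWithinAt g (g' t) S t) →
      ∀ t ∈ Set.Icc 0 d, HasDerivWithinAt (fun t => a * g (c + s * t)) (b * g' (c + s * t))
        (Set.Icc 0 d) t := by
    intro g g' a b hab hg t ht
    have hl : HasDerivWithinAt (fun t => c + s * t) s (Set.Icc 0 d) t := by
      have := (((hasDerivAt_id t).const_mul s).const_add c).hasDerivWithinAt (s := Set.Icc 0 d)
      refine this.congr_deriv ?_; simp
    have := ((hg _ (hS t ht)).comp t hl hS).const_mul a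
    refine this.congr_deriv ?_
    rw [← hab]; ring
  have := aux_taylor (fun t => 1 * f0 (c + s * t)) (fun t => s * f1 (c + s * t))
    (fun t => 1 * f2 (c + s * t)) (fun t => s * f3 (c + s * t)) (fun t => 1 * f4 (c + s * t)) d L hd
    (comp _ _ _ _ (by ring) h0) (comp _ _ _ _ hs2 h1)
    (comp _ _ _ _ (by ring) h2) (comp _ _ _ _ hs2 h3)
    (fun t ht => by simpa using hb _ (hS t ht))
  obtain ⟨p, q⟩ := this
  simp only [mul_zero, add_zero] at p q
  constructor
  · have e : s * f1 (c + s * d) - s * f1 c - d * (1 * f2 c) - d ^ 2 / 2 * (s * f3 c)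
      = s * (f1 (c + s * d) - f1 c - s * d * f2 c - d ^ 2 / 2 * f3 c) := by
      linear_combination (d * f2 c) * hs2
    rw [e, abs_mul, hsa, one_mul] at p
    exact p
  · convert q using 2
    ring

theorem aux_trunc (f0m f0 f0p f1m f1 f1p f2 f3 h k L H : ℝ) (hh : 0 < h) (hk : 0 < k)
    (hhH : h ≤ H) (hkH : k ≤ H) (hL : 0 < L)
    (a1 : |f1p - f1 - 1 * k * f2 - k ^ 2 / 2 * f3| ≤ L / 6 * k ^ 3)
    (a0 : |f0p - f0 - 1 * k * f1 - k ^ 2 / 2 * f2 - 1 * k ^ 3 / 6 * f3| ≤ L / 24 * k ^ 4)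
    (b1 : |f1m - f1 - (-1) * h * f2 - h ^ 2 / 2 * f3| ≤ L / 6 * h ^ 3)
    (b0 : |f0m - f0 - (-1) * h * f1 - h ^ 2 / 2 * f2 - (-1) * h ^ 3 / 6 * f3| ≤ L / 24 * h ^ 4) :
    |3 * (k / (h + k) * ((f0 - f0m) / h) + h / (h + k) * ((f0p - f0) / k))
      - k / (h + k) * f1m - 2 * f1 - h / (h + k) * f1p| ≤ L * H ^ 3 := by
  set A1 := f1p - f1 - 1 * k * f2 - k ^ 2 / 2 * f3 with hA1
  set A0 := f0p - f0 - 1 * k * f1 - k ^ 2 / 2 * f2 - 1 * k ^ 3 / 6 * f3 with hA0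
  set B1 := f1m - f1 - (-1) * h * f2 - h ^ 2 / 2 * f3 with hB1
  set B0 := f0m - f0 - (-1) * h * f1 - h ^ 2 / 2 * f2 - (-1) * h ^ 3 / 6 * f3 with hB0
  have key : 3 * (k / (h + k) * ((f0 - f0m) / h) + h / (h + k) * ((f0p - f0) / k))
      - k / (h + k) * f1m - 2 * f1 - h / (h + k) * f1p
      = k / (h + k) * (-(3 * (B0 / h)) - B1) + h / (h + k) * (3 * (A0 / k) - A1) := by
    rw [hA1, hA0, hB1, hB0]
    field_simp
    ring
  rw [key]
  have q : ∀ (u X Y : ℝ), 0 < u → u ≤ H → |X| ≤ L / 24 * u ^ 4 → |Y| ≤ L / 6 * u ^ 3 →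
      3 * |X / u| + |Y| ≤ L * H ^ 3 := by
    intro u X Y hu huH hX hY
    have h1 : |X / u| ≤ L / 24 * u ^ 3 := by
      rw [abs_div, abs_of_pos hu, div_le_iff₀ hu]
      exact hX.trans (le_of_eq (by ring))
    have h2 : L * u ^ 3 ≤ L * H ^ 3 := by gcongr
    have h3 : 0 < L * u ^ 3 := by positivity
    linarith
  have qa := q k A0 A1 hk hkH a0 a1
  have qb := q h B0 B1 hh hhH b0 b1
  have hl : 0 ≤ k / (h + k) := by positivity
  have hm : 0 ≤ h / (h + k) := by positivity
  have hlm : k / (h + k) + h / (h + k) = 1 := by field_simp; ring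
  have ta : |3 * (A0 / k) - A1| ≤ L * H ^ 3 := by
    have := abs_sub (3 * (A0 / k)) A1
    rw [abs_mul, abs_of_pos (by norm_num : (0 : ℝ) < 3)] at this
    linarith
  have tb : |-(3 * (B0 / h)) - B1| ≤ L * H ^ 3 := by
    have := abs_sub (-(3 * (B0 / h))) B1
    rw [abs_neg, abs_mul, abs_of_pos (by norm_num : (0 : ℝ) < 3)] at this
    linarith
  calc _ ≤ k / (h + k) * |-(3 * (B0 / h)) - B1| + h / (h + k) * |3 * (A0 / k) - A1| := by
        refine (abs_add_le _ _).trans (le_of_eq ?_)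
        rw [abs_mul, abs_mul, abs_of_nonneg hl, abs_of_nonneg hm]
    _ ≤ k / (h + k) * (L * H ^ 3) + h / (h + k) * (L * H ^ 3) := by gcongr
    _ = L * H ^ 3 := by rw [← add_mul, hlm, one_mul]

/-- Third-order accuracy of the derivative values computed from the spline
system `A·Ḟ = B` (written row-wise: `λⱼ₋₁ḟⱼ₋₁ + 2ḟⱼ + μⱼ₋₁ḟⱼ₊₁ =
3(λⱼ₋₁mⱼ₋₁ + μⱼ₋₁mⱼ)` for `2 ≤ j ≤ n−1`, with `ḟ₁ = f'(x₁)`, `ḟₙ = f'(xₙ)`):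
`max_{2≤i≤n−1} |ḟᵢ − f'(xᵢ)| ≤ ((17K + K²)/16 + 1)·L·ĥ³`. -/
theorem spline_derivatives_third_order (n : ℕ) (x : ℕ → ℝ) (f : ℝ → ℝ)
    (df : ℕ → ℝ) (L K hhat : ℝ) (hn : 3 ≤ n)
    (hx : ∀ i, 1 ≤ i → i ≤ n - 1 → x i < x (i + 1))
    (hf : ContDiffOn ℝ 4 f (Set.Icc (x 1) (x n)))
    (hL : 0 < L)
    (hLb : ∀ t ∈ Set.Icc (x 1) (x n),
      |iteratedDerivWithin 4 f (Set.Icc (x 1) (x n)) t| ≤ L)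
    (hhat1 : hhat < 1)
    (hub : ∀ i, 1 ≤ i → i ≤ n - 1 → hstep x i ≤ hhat)
    (hach : ∃ i, 1 ≤ i ∧ i ≤ n - 1 ∧ hhat = hstep x i)
    (hK : 0 < K)
    (hKb : ∀ j, 1 ≤ j → j ≤ n - 1 → hhat / hstep x j ≤ K)
    (hdf1 : df 1 = derivWithin f (Set.Icc (x 1) (x n)) (x 1))
    (hdfn : df n = derivWithin f (Set.Icc (x 1) (x n)) (x n))
    (hsys : ∀ j, 2 ≤ j → j ≤ n - 1 →
      lamb x (j - 1) * df (j - 1) + 2 * df j + mub x (j - 1) * df (j + 1)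
        = 3 * (lamb x (j - 1) * mslope x f (j - 1) + mub x (j - 1) * mslope x f j)) :
    ∀ i, 2 ≤ i → i ≤ n - 1 →
      |df i - derivWithin f (Set.Icc (x 1) (x n)) (x i)|
        ≤ ((17 * K + K ^ 2) / 16 + 1) * L * hhat ^ 3 := by
  have hmono : ∀ i j, 1 ≤ i → i ≤ j → j ≤ n → x i ≤ x j := by
    intro i j hi hij
    induction j, hij using Nat.le_induction with
    | base => intro _; exact le_rfl
    | succ j hj ih =>
      intro hjn
      exact (ih (by omega)).trans (hx j (by omega) (by omega)).le
  have h1n : x 1 < x n := (hx 1 le_rfl (by omega)).trans_le (hmono 2 n (by omega) (by omega) le_rfl)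
  set S := Set.Icc (x 1) (x n) with hSdef
  have hU : UniqueDiffOn ℝ S := uniqueDiffOn_Icc h1n
  have hder : ∀ m : ℕ, m < 4 → ∀ t ∈ S, HasDerivWithinAt (iteratedDerivWithin m f S)
      (iteratedDerivWithin (m + 1) f S t) S t := by
    intro m hm t ht
    rw [iteratedDerivWithin_succ]
    exact ((hf.differentiableOn_iteratedDerivWithin (by exact_mod_cast hm) hU) t ht).hasDerivWithinAt
  have hmem : ∀ i, 1 ≤ i → i ≤ n → x i ∈ S := fun i h1 h2 =>
    ⟨hmono 1 i le_rfl h1 h2, hmono i n h1 h2 le_rfl⟩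
  have hH : 0 < hhat := by
    have := hx 1 le_rfl (by omega)
    have := hub 1 le_rfl (by omega)
    unfold hstep at this
    linarith
  have htr : ∀ j, 2 ≤ j → j ≤ n - 1 →
      |3 * (lamb x (j - 1) * mslope x f (j - 1) + mub x (j - 1) * mslope x f j)
        - lamb x (j - 1) * derivWithin f S (x (j - 1)) - 2 * derivWithin f S (x j)
        - mub x (j - 1) * derivWithin f S (x (j + 1))| ≤ L * hhat ^ 3 := by
    intro j h2 hj
    obtain ⟨i, rfl⟩ : ∃ i, j = i + 1 := ⟨j - 1, by omega⟩
    simp only [Nat.add_sub_cancel]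
    have hi := hx i (by omega) (by omega)
    have hi' := hx (i + 1) (by omega) (by omega)
    have m0 := hmem i (by omega) (by omega)
    have m2 := hmem (i + 1 + 1) (by omega) (by omega)
    have T := fun (s d : ℝ) (hd : 0 ≤ d) (hs : s = 1 ∨ s = -1) hS =>
      aux_right _ _ _ _ _ S (x (i + 1)) d L s hd hs hS
        (hder 0 (by norm_num)) (hder 1 (by norm_num)) (hder 2 (by norm_num))
        (hder 3 (by norm_num)) hLb
    obtain ⟨a1, a0⟩ := T 1 (x (i + 1 + 1) - x (i + 1)) (by linarith) (Or.inl rfl)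
      (fun t ht => ⟨by linarith [m0.1, ht.1], by linarith [m2.2, ht.2]⟩)
    obtain ⟨b1, b0⟩ := T (-1) (x (i + 1) - x i) (by linarith) (Or.inr rfl)
      (fun t ht => ⟨by linarith [m0.1, ht.2], by linarith [m2.2, ht.1]⟩)
    have ep : x (i + 1) + 1 * (x (i + 1 + 1) - x (i + 1)) = x (i + 1 + 1) := by ring
    have em : x (i + 1) + (-1) * (x (i + 1) - x i) = x i := by ring
    rw [ep] at a1 a0
    rw [em] at b1 b0
    simp only [zero_add, iteratedDerivWithin_zero, iteratedDerivWithin_one] at a1 a0 b1 b0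
    have := aux_trunc _ _ _ _ _ _ _ _ (x (i + 1) - x i) (x (i + 1 + 1) - x (i + 1)) L hhat
      (by linarith) (by linarith) (hub i (by omega) (by omega)) (hub (i + 1) (by omega) (by omega))
      hL a1 a0 b1 b0
    exact this
  set e : ℕ → ℝ := fun i => df i - derivWithin f S (x i) with he
  obtain ⟨p, hp, hpm⟩ := Finset.exists_max_image (Finset.Icc 1 n) (fun i => |e i|)
    ⟨1, by simp; omega⟩
  rw [Finset.mem_Icc] at hp
  have hC : 0 < L * hhat ^ 3 := by positivity
  have hmain : |e p| ≤ L * hhat ^ 3 := by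
    by_cases hp1 : p = 1
    · have : e p = 0 := by rw [he, hp1]; simp [hdf1]
      rw [this, abs_zero]; exact hC.le
    by_cases hpn : p = n
    · have : e p = 0 := by rw [he, hpn]; simp [hdfn]
      rw [this, abs_zero]; exact hC.le
    have r := htr p (by omega) (by omega)
    rw [← hsys p (by omega) (by omega)] at r
    have l1 := hpm (p - 1) (by rw [Finset.mem_Icc]; omega)
    have l2 := hpm (p + 1) (by rw [Finset.mem_Icc]; omega)
    obtain ⟨i, rfl⟩ : ∃ i, p = i + 1 := ⟨p - 1, by omega⟩
    simp only [Nat.add_sub_cancel] at r l1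
    have s1 : 0 < hstep x i := sub_pos.2 (hx i (by omega) (by omega))
    have s2 : 0 < hstep x (i + 1) := sub_pos.2 (hx (i + 1) (by omega) (by omega))
    have hl : 0 ≤ lamb x i := by unfold lamb; positivity
    have hm : 0 ≤ mub x i := by unfold mub; positivity
    have hlm : lamb x i + mub x i = 1 := by unfold lamb mub; field_simp; ring
    have r' : |lamb x i * e i + 2 * e (i + 1) + mub x i * e (i + 1 + 1)| ≤ L * hhat ^ 3 := by
      convert r using 2
      simp only [he]; ring
    have c1 : |lamb x i * e i| ≤ lamb x i * |e (i + 1)| := by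
      rw [abs_mul, abs_of_nonneg hl]; gcongr
    have c2 : |mub x i * e (i + 1 + 1)| ≤ mub x i * |e (i + 1)| := by
      rw [abs_mul, abs_of_nonneg hm]; gcongr
    have c3 : lamb x i * |e (i + 1)| + mub x i * |e (i + 1)| = |e (i + 1)| := by
      rw [← add_mul, hlm, one_mul]
    rw [abs_le] at r' c1 c2
    rcases abs_cases (e (i + 1)) with ⟨h, _⟩ | ⟨h, _⟩ <;> linarith [r'.1, r'.2, c1.1, c1.2, c2.1, c2.2]
  intro i hi1 hi2
  have := hpm i (by rw [Finset.mem_Icc]; omega)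
  refine (this.trans hmain).trans ?_
  have : 0 ≤ (17 * K + K ^ 2) / 16 * (L * hhat ^ 3) := by positivity
  linarith
end

section
/- Let x_1 < … < x_n with nondecreasing data f_1 ≤ … ≤ f_n such that m_i > 0 for all 1 ≤ i ≤ n−1, and for 2 ≤ i ≤ n−1 let ḟ_i = ḟ_i^{B} = (wl_i + wr_i)·m_{i−1}·m_i/(wl_i·m_i + wr_i·m_{i−1}) with wl_i = h_{i−1} + 2·h_i, wr_i = 2·h_{i−1} + h_i (Brodlie's formula). Then: (a) 0 < ḟ_i^{B} and ḟ_i^{B} ≤ 3·min(m_{i−1}, m_i) for every 2 ≤ i ≤ n−1; consequently, for every 2 ≤ i ≤ n−2 the cubic Hermite interpolant on [x_i, x_{i+1}] of (f_i, ḟ_i), (f_{i+1}, ḟ_{i+1}) is nondecreasing; (b) if the data come from a function f that is three times continuously differentiable on [x_1, x_n] with f'(x) ≥ δ > 0 there, and the grid is uniform (h_i = h for all i), then the piecewise cubic Hermite interpolant built from these derivative values approximates f with third-order accuracy, i.e. there is a constant C depending only on δ and on bounds of the derivatives of f such that sup_{x∈[x_i,x_{i+1}]} |P_i(x) − f(x)|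 ≤ C·h³ for 2 ≤ i ≤ n−2 (and with second-order accuracy C·ĥ² on non-uniform grids). -/
/-- The cubic Hermite interpolant on `[xi, xip]` of the data
`(fi, di)`, `(fip, dip)`. -/
noncomputable def hermite (xi xip fi fip di dip : ℝ) : ℝ → ℝ := fun t =>
  fi + di * (t - xi)
    + (((fip - fi) / (xip - xi) - di) / (xip - xi)) * (t - xi) ^ 2
    + ((dip + di - 2 * ((fip - fi) / (xip - xi))) / (xip - xi) ^ 2)
        * (t - xi) ^ 2 * (t - xip)

/-- Brodlie's derivative value: `ḟᵢ^B = (wl + wr)·mᵢ₋₁·mᵢ/(wl·mᵢ + wr·mᵢ₋₁)`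
with `wl = hᵢ₋₁ + 2hᵢ`, `wr = 2hᵢ₋₁ + hᵢ`. -/
noncomputable def brodlie (hm hi mm mi : ℝ) : ℝ :=
  ((hm + 2 * hi) + (2 * hm + hi)) * mm * mi / ((hm + 2 * hi) * mi + (2 * hm + hi) * mm)

lemma aux_brodlie_bounds (p q u v : ℝ) (hp : 0 < p) (hq : 0 < q) (hu : 0 < u) (hv : 0 < v) :
    0 < brodlie p q u v ∧ brodlie p q u v ≤ 3 * u ∧ brodlie p q u v ≤ 3 * v ∧
    |brodlie p q u v - u| ≤ |u - v| ∧ |brodlie p q u v - v| ≤ |u - v| := by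
  have hD : 0 < (p + 2 * q) * v + (2 * p + q) * u := by positivity
  have pu : 0 < p * u := by positivity
  have pv : 0 < p * v := by positivity
  have qu : 0 < q * u := by positivity
  have qv : 0 < q * v := by positivity
  unfold brodlie
  refine ⟨by positivity, ?_, ?_, ?_, ?_⟩
  · rw [div_le_iff₀ hD]
    nlinarith [mul_pos pu hu, mul_pos qu hu, mul_pos pu hv, mul_pos qu hv]
  · rw [div_le_iff₀ hD]
    nlinarith [mul_pos pv hv, mul_pos qv hv, mul_pos pu hv, mul_pos qu hv]
  · have : ((p + 2 * q) + (2 * p + q)) * u * v / ((p + 2 * q) * v + (2 * p + q) * u) - u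
        = -((2 * p + q) * u / ((p + 2 * q) * v + (2 * p + q) * u)) * (u - v) := by
      field_simp
      ring
    rw [this, abs_mul, abs_neg]
    have h1 : |(2 * p + q) * u / ((p + 2 * q) * v + (2 * p + q) * u)| ≤ 1 := by
      rw [abs_of_nonneg (by positivity), div_le_one hD]
      nlinarith
    nlinarith [abs_nonneg (u - v)]
  · have : ((p + 2 * q) + (2 * p + q)) * u * v / ((p + 2 * q) * v + (2 * p + q) * u) - v
        = ((p + 2 * q) * v / ((p + 2 * q) * v + (2 * p + q) * u)) * (u - v) := by
      field_simp
      ring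
    rw [this, abs_mul]
    have h1 : |(p + 2 * q) * v / ((p + 2 * q) * v + (2 * p + q) * u)| ≤ 1 := by
      rw [abs_of_nonneg (by positivity), div_le_one hD]
      nlinarith
    nlinarith [abs_nonneg (u - v)]

lemma aux_quad (m d e s : ℝ) (hm : 0 < m) (hd : 0 ≤ d) (he : 0 ≤ e) (hd3 : d ≤ 3 * m)
    (he3 : e ≤ 3 * m) (hs : 0 ≤ s) (hs1 : s ≤ 1) :
    0 ≤ d * (1 - 4 * s + 3 * s ^ 2) + e * (3 * s ^ 2 - 2 * s) + 6 * m * (s * (1 - s)) := by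
  have a1 : 0 ≤ 3 * m - d := by linarith
  have a2 : 0 ≤ 3 * m - e := by linarith
  have a3 : 0 ≤ 1 - s := by linarith
  have key : (9 * m ^ 2) * (d * (1 - 4 * s + 3 * s ^ 2) + e * (3 * s ^ 2 - 2 * s)
      + 6 * m * (s * (1 - s))) = (3 * m - d) * (3 * m - e) * (6 * m * (s * (1 - s)))
      + d * (3 * m - e) * (3 * m * (1 - s) ^ 2) + (3 * m - d) * e * (3 * m * s ^ 2)
      + d * e * (3 * m * (2 * s - 1) ^ 2) := by ring
  have : 0 ≤ (9 * m ^ 2) * (d * (1 - 4 * s + 3 * s ^ 2) + e * (3 * s ^ 2 - 2 * s)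
      + 6 * m * (s * (1 - s))) := by rw [key]; positivity
  exact nonneg_of_mul_nonneg_right this (by positivity)

lemma aux_mono (a b fa fb d e : ℝ) (hab : a < b) (hm : 0 < (fb - fa) / (b - a))
    (hd : 0 ≤ d) (he : 0 ≤ e) (hd3 : d ≤ 3 * ((fb - fa) / (b - a)))
    (he3 : e ≤ 3 * ((fb - fa) / (b - a))) :
    MonotoneOn (hermite a b fa fb d e) (Set.Icc a b) := by
  unfold hermite
  generalize (fb - fa) / (b - a) = m at *
  have hh : 0 < b - a := by linarith
  have hder : ∀ t, HasDerivAt (fun t => fa + d * (t - a) + ((m - d) / (b - a)) * (t - a) ^ 2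
      + ((e + d - 2 * m) / (b - a) ^ 2) * (t - a) ^ 2 * (t - b))
      (d * (1 - 4 * ((t - a) / (b - a)) + 3 * ((t - a) / (b - a)) ^ 2)
      + e * (3 * ((t - a) / (b - a)) ^ 2 - 2 * ((t - a) / (b - a)))
      + 6 * m * (((t - a) / (b - a)) * (1 - (t - a) / (b - a)))) t := by
    intro t
    have h1 : HasDerivAt (fun t : ℝ => t - a) 1 t := (hasDerivAt_id t).sub_const a
    have h2 : HasDerivAt (fun t : ℝ => t - b) 1 t := (hasDerivAt_id t).sub_const b
    have h3 := (((h1.const_mul d).const_add fa).add ((h1.pow 2).const_mul ((m - d) / (b - a)))).add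
      (((h1.pow 2).const_mul ((e + d - 2 * m) / (b - a) ^ 2)).mul h2)
    refine HasDerivAt.congr_deriv h3 ?_
    simp
    field_simp
    ring
  refine monotoneOn_of_deriv_nonneg (convex_Icc a b)
    (fun t _ => (hder t).continuousAt.continuousWithinAt)
    (fun t _ => (hder t).differentiableAt.differentiableWithinAt) ?_
  intro t ht
  rw [interior_Icc] at ht
  rw [(hder t).deriv]
  refine aux_quad m d e _ hm hd he hd3 he3 (div_nonneg (by linarith [ht.1]) hh.le) ?_
  rw [div_le_one hh]; linarith [ht.2]

lemma aux_lip (I : Set ℝ) [hI : I.OrdConnected] (g g' : ℝ → ℝ) (a b K c : ℝ) (ha : a ∈ I) (hb : b ∈ I)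
    (hg : ∀ t ∈ I, HasDerivWithinAt g (g' t) I t)
    (hK : ∀ t ∈ I, |t - a| ≤ |b - a| → |g' t - c| ≤ K) :
    |g b - g a - c * (b - a)| ≤ K * |b - a| := by
  have hsub : Set.uIcc a b ⊆ I := hI.uIcc_subset ha hb
  have h := Convex.norm_image_sub_le_of_norm_hasDerivWithin_le (𝕜 := ℝ)
    (f := fun t => g t - c * t) (f' := fun t => g' t - c) (s := Set.uIcc a b) (C := K) (x := a) (y := b)
    (fun t ht => by
      have := ((hg t (hsub ht)).mono hsub).sub ((hasDerivWithinAt_id t _).const_mul c)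
      rw [mul_one] at this
      exact this)
    (fun t ht => by
      rw [Real.norm_eq_abs]
      refine hK t (hsub ht) (Set.abs_sub_left_of_mem_uIcc ht)) (convex_uIcc a b) Set.left_mem_uIcc
      Set.right_mem_uIcc
  simp only [Real.norm_eq_abs] at h
  convert h using 2
  ring

/-- Taylor bounds. -/
lemma aux_taylor_s18 (I : Set ℝ) [hI : I.OrdConnected] (f g1 g2 g3 : ℝ → ℝ) (M : ℝ) (hM : 0 ≤ M)
    (h1 : ∀ t ∈ I, HasDerivWithinAt f (g1 t) I t)
    (h2 : ∀ t ∈ I, HasDerivWithinAt g1 (g2 t) I t)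
    (h3 : ∀ t ∈ I, HasDerivWithinAt g2 (g3 t) I t)
    (b2 : ∀ t ∈ I, |g2 t| ≤ M) (b3 : ∀ t ∈ I, |g3 t| ≤ M) (a b : ℝ) (ha : a ∈ I) (hb : b ∈ I) :
    |f b - f a - g1 a * (b - a)| ≤ M * |b - a| ^ 2 ∧
    |g1 b - g1 a - g2 a * (b - a)| ≤ M * |b - a| ^ 2 ∧
    |f b - f a - g1 a * (b - a) - g2 a / 2 * (b - a) ^ 2| ≤ M * |b - a| ^ 3 := by
  have A : ∀ t ∈ I, |g1 t - g1 a| ≤ M * |t - a| := fun t ht => by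
    simpa using aux_lip I g1 g2 a t M 0 ha ht h2 (fun s hs _ => by simpa using b2 s hs)
  have B : ∀ t ∈ I, |g2 t - g2 a| ≤ M * |t - a| := fun t ht => by
    simpa using aux_lip I g2 g3 a t M 0 ha ht h3 (fun s hs _ => by simpa using b3 s hs)
  have D : ∀ t ∈ I, |g1 t - g1 a - g2 a * (t - a)| ≤ M * |t - a| ^ 2 := fun t ht => by
    have := aux_lip I g1 g2 a t (M * |t - a|) (g2 a) ha ht h2 (fun s hs hst =>
      (B s hs).trans (by gcongr))
    linarith
  refine ⟨?_, D b hb, ?_⟩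
  · have := aux_lip I f g1 a b (M * |b - a|) (g1 a) ha hb h1 (fun s hs hst =>
      (A s hs).trans (by gcongr))
    linarith
  · have := aux_lip I (fun t => f t - g1 a * (t - a) - g2 a / 2 * (t - a) ^ 2)
      (fun t => g1 t - g1 a - g2 a * (t - a)) a b (M * |b - a| ^ 2) 0 ha hb
      (fun t ht => by
        have k1 : HasDerivWithinAt (fun t : ℝ => t - a) 1 I t :=
          (hasDerivWithinAt_id t _).sub_const a
        have := ((h1 t ht).sub (k1.const_mul (g1 a))).sub ((k1.pow 2).const_mul (g2 a / 2))
        refine HasDerivWithinAt.congr_deriv this ?_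
        push_cast; ring)
      (fun s hs hst => by
        rw [sub_zero]
        exact (D s hs).trans (by gcongr))
    simp only [sub_self] at this
    calc _ = _ := by congr 1; ring
      _ ≤ _ := this
      _ = _ := by ring

lemma aux_slope (I : Set ℝ) [hI : I.OrdConnected] (f g1 : ℝ → ℝ) (δ : ℝ)
    (h1 : ∀ t ∈ I, HasDerivWithinAt f (g1 t) I t) (hδ : ∀ t ∈ I, δ ≤ g1 t)
    (a b : ℝ) (hab : a < b) (ha : a ∈ I) (hb : b ∈ I) : δ ≤ (f b - f a) / (b - a) := by
  have hsub : Set.Icc a b ⊆ I := hI.out ha hb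
  obtain ⟨c, hc, h⟩ := exists_hasDerivAt_eq_slope f g1 hab
    (fun t ht => ((h1 t (hsub ht)).mono hsub).continuousWithinAt)
    (fun t ht => ((h1 t (hsub (Set.Ioo_subset_Icc_self ht))).mono hsub).hasDerivAt
      (Icc_mem_nhds ht.1 ht.2))
  rw [← h]
  exact hδ c (hsub (Set.Ioo_subset_Icc_self hc))

lemma aux_herm_eq (a b fa fb d e t : ℝ) (hab : a < b) : hermite a b fa fb d e t =
    fa + d * (b - a) * ((t - a) / (b - a)) + (fb - fa - d * (b - a)) * ((t - a) / (b - a)) ^ 2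
    + ((e + d) * (b - a) - 2 * (fb - fa)) * (((t - a) / (b - a)) ^ 2 * ((t - a) / (b - a) - 1)) := by
  have : b - a ≠ 0 := by linarith
  unfold hermite
  field_simp
  ring

lemma aux_mul (A s B : ℝ) (hA : |A| ≤ B) (hs : |s| ≤ 1) : |A * s| ≤ B := by
  rw [abs_mul]
  nlinarith [abs_nonneg A, abs_nonneg s]

/-- third order, given derivative errors -/
lemma aux_third (a b fa fb ft d e ga gb g2 t M K : ℝ) (hab : a < b) (ht : t ∈ Set.Icc a b) (hM : 0 ≤ M)
    (hR1 : |fb - fa - ga * (b - a) - g2 / 2 * (b - a) ^ 2| ≤ M * |b - a| ^ 3)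
    (hR2 : |gb - ga - g2 * (b - a)| ≤ M * |b - a| ^ 2)
    (hR3 : |ft - fa - ga * (t - a) - g2 / 2 * (t - a) ^ 2| ≤ M * |t - a| ^ 3)
    (hd : |d - ga| ≤ K * (b - a) ^ 2) (he : |e - gb| ≤ K * (b - a) ^ 2) :
    |hermite a b fa fb d e t - ft| ≤ (4 * K + 5 * M) * (b - a) ^ 3 := by
  rw [aux_herm_eq _ _ _ _ _ _ _ hab]
  have hh : 0 < b - a := by linarith
  obtain ⟨s, hs⟩ : ∃ s, s = (t - a) / (b - a) := ⟨_, rfl⟩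
  rw [← hs]
  have hts : t - a = s * (b - a) := by rw [hs]; field_simp
  have hs0 : 0 ≤ s := by rw [hs]; exact div_nonneg (by linarith [ht.1]) hh.le
  have hs1 : s ≤ 1 := by rw [hs, div_le_one hh]; linarith [ht.2]
  have q1 : |s| ≤ 1 := by rw [abs_of_nonneg hs0]; exact hs1
  have q2 : |s ^ 2| ≤ 1 := by rw [abs_of_nonneg (by positivity)]; nlinarith
  have q3 : |s ^ 2 * (s - 1)| ≤ 1 := by
    rw [abs_mul]
    have : |s - 1| ≤ 1 := by rw [abs_le]; constructor <;> linarith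
    nlinarith [abs_nonneg (s - 1), abs_nonneg (s ^ 2)]
  have hR3' : |ft - fa - ga * (t - a) - g2 / 2 * (t - a) ^ 2| ≤ M * (b - a) ^ 3 := by
    refine hR3.trans ?_
    have : |t - a| ≤ b - a := by rw [abs_of_nonneg (by linarith [ht.1])]; linarith [ht.2]
    gcongr
  rw [abs_of_pos hh] at hR1 hR2
  rw [hts] at hR3'
  generalize b - a = h at *
  have hd' : |(d - ga) * h| ≤ K * h ^ 3 := by
    rw [abs_mul, abs_of_pos hh]; nlinarith
  have he' : |(e - gb) * h| ≤ K * h ^ 3 := by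
    rw [abs_mul, abs_of_pos hh]; nlinarith
  have hR2' : |(gb - ga - g2 * h) * h| ≤ M * h ^ 3 := by
    rw [abs_mul, abs_of_pos hh]; nlinarith
  have t1 := aux_mul _ _ _ hd' q1
  have t1' := aux_mul _ _ _ hd' q2
  have t2 := aux_mul _ _ _ hR1 q2
  have t3 := aux_mul _ _ _ hd' q3
  have t4 := aux_mul _ _ _ he' q3
  have t5 := aux_mul _ _ _ hR2' q3
  have t6 := aux_mul _ _ _ hR1 q3
  rw [abs_le] at *
  constructor <;> linarith [t1.1, t1.2, t1'.1, t1'.2, t2.1, t2.2, t3.1, t3.2, t4.1, t4.2, t5.1, t5.2,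
    t6.1, t6.2, hR3'.1, hR3'.2]

/-- second order -/
lemma aux_second (a b fa fb ft d e ga t M H : ℝ) (hab : a < b) (ht : t ∈ Set.Icc a b) (hM : 0 ≤ M)
    (hH : b - a ≤ H)
    (hR1 : |fb - fa - ga * (b - a)| ≤ M * |b - a| ^ 2)
    (hR3 : |ft - fa - ga * (t - a)| ≤ M * |t - a| ^ 2)
    (hd : |d - (fb - fa) / (b - a)| ≤ 2 * M * H) (he : |e - (fb - fa) / (b - a)| ≤ 2 * M * H) :
    |hermite a b fa fb d e t - ft| ≤ 10 * M * H ^ 2 := by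
  rw [aux_herm_eq _ _ _ _ _ _ _ hab]
  have hh : 0 < b - a := by linarith
  obtain ⟨s, hs⟩ : ∃ s, s = (t - a) / (b - a) := ⟨_, rfl⟩
  rw [← hs]
  have hts : t - a = s * (b - a) := by rw [hs]; field_simp
  have hs0 : 0 ≤ s := by rw [hs]; exact div_nonneg (by linarith [ht.1]) hh.le
  have hs1 : s ≤ 1 := by rw [hs, div_le_one hh]; linarith [ht.2]
  have q1 : |s| ≤ 1 := by rw [abs_of_nonneg hs0]; exact hs1
  have q2 : |s ^ 2| ≤ 1 := by rw [abs_of_nonneg (by positivity)]; nlinarith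
  have q3 : |s ^ 2 * (s - 1)| ≤ 1 := by
    rw [abs_mul]
    have : |s - 1| ≤ 1 := by rw [abs_le]; constructor <;> linarith
    nlinarith [abs_nonneg (s - 1), abs_nonneg (s ^ 2)]
  have hR3' : |ft - fa - ga * (t - a)| ≤ M * H ^ 2 := by
    refine hR3.trans ?_
    have : |t - a| ≤ H := by rw [abs_of_nonneg (by linarith [ht.1])]; linarith [ht.2]
    gcongr
  have hR1' : |fb - fa - ga * (b - a)| ≤ M * H ^ 2 := by
    refine hR1.trans ?_
    have : |b - a| ≤ H := by rw [abs_of_pos hh]; exact hH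
    gcongr
  have hd' : |d * (b - a) - (fb - fa)| ≤ 2 * M * H ^ 2 := by
    have : d * (b - a) - (fb - fa) = (d - (fb - fa) / (b - a)) * (b - a) := by field_simp
    rw [this, abs_mul, abs_of_pos hh]
    have hH0 : 0 ≤ 2 * M * H := (abs_nonneg _).trans hd
    calc _ ≤ 2 * M * H * H := by gcongr
      _ = _ := by ring
  have he' : |e * (b - a) - (fb - fa)| ≤ 2 * M * H ^ 2 := by
    have : e * (b - a) - (fb - fa) = (e - (fb - fa) / (b - a)) * (b - a) := by field_simp
    rw [this, abs_mul, abs_of_pos hh]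
    have hH0 : 0 ≤ 2 * M * H := (abs_nonneg _).trans hd
    calc _ ≤ 2 * M * H * H := by gcongr
      _ = _ := by ring
  rw [hts] at hR3'
  have t1 := aux_mul _ _ _ hd' q1
  have t1' := aux_mul _ _ _ hd' q2
  have t2 := aux_mul _ _ _ hR1' q1
  have t3 := aux_mul _ _ _ hd' q3
  have t4 := aux_mul _ _ _ he' q3
  generalize b - a = h at *
  rw [abs_le] at t1 t1' t2 t3 t4 hR3' ⊢
  constructor <;> linarith [t1.1, t1.2, t1'.1, t1'.2, t2.1, t2.2, t3.1, t3.2, t4.1, t4.2,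
    hR3'.1, hR3'.2]

lemma aux_slope_err (fa fb ga a b M H : ℝ) (hab : a ≠ b) (hM : 0 ≤ M) (hH : |b - a| ≤ H)
    (hR : |fb - fa - ga * (b - a)| ≤ M * |b - a| ^ 2) : |(fb - fa) / (b - a) - ga| ≤ M * H := by
  have h0 : b - a ≠ 0 := sub_ne_zero.mpr hab.symm
  have : (fb - fa) / (b - a) - ga = (fb - fa - ga * (b - a)) / (b - a) := by field_simp
  rw [this, abs_div, div_le_iff₀ (abs_pos.mpr h0)]
  refine hR.trans ?_
  have := abs_nonneg (b - a)
  nlinarith [mul_le_mul_of_nonneg_left hH (mul_nonneg hM this)]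

/-- derivative accuracy on uniform grids -/
lemma aux_deriv (h fl fm fr g g2 M δ : ℝ) (hh : 0 < h) (hδ : 0 < δ) (hM : 0 ≤ M)
    (hl : |fl - fm - g * (-h) - g2 / 2 * (-h) ^ 2| ≤ M * h ^ 3)
    (hr : |fr - fm - g * h - g2 / 2 * h ^ 2| ≤ M * h ^ 3)
    (hml : δ ≤ (fm - fl) / h) (hmr : δ ≤ (fr - fm) / h)
    (hdiff : |(fm - fl) / h - (fr - fm) / h| ≤ 2 * M * h) :
    |brodlie h h ((fm - fl) / h) ((fr - fm) / h) - g| ≤ (M + M ^ 2 / δ) * h ^ 2 := by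
  have havg : |((fm - fl) / h + (fr - fm) / h) / 2 - g| ≤ M * h ^ 2 := by
    have : ((fm - fl) / h + (fr - fm) / h) / 2 - g
        = ((fr - fm - g * h - g2 / 2 * h ^ 2) - (fl - fm - g * (-h) - g2 / 2 * (-h) ^ 2)) / (2 * h) := by
      field_simp; ring
    rw [this, abs_div, abs_of_pos (by positivity : 0 < 2 * h), div_le_iff₀ (by positivity)]
    refine (abs_sub _ _).trans ?_
    linarith
  generalize (fm - fl) / h = u at *
  generalize (fr - fm) / h = v at *
  have huv : 0 < u + v := by linarith
  have e1 : brodlie h h u v = (u + v) / 2 - (u - v) ^ 2 / (2 * (u + v)) := by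
    unfold brodlie
    have : (h + 2 * h) * v + (2 * h + h) * u = 3 * h * (u + v) := by ring
    rw [this]
    field_simp
    ring
  have e2 : (u - v) ^ 2 / (2 * (u + v)) ≤ M ^ 2 / δ * h ^ 2 := by
    have : (u - v) ^ 2 ≤ (2 * M * h) ^ 2 := by
      rw [← sq_abs]; gcongr
    calc _ ≤ (2 * M * h) ^ 2 / (2 * (δ + δ)) := by gcongr
      _ = _ := by field_simp; ring
  have e3 : 0 ≤ (u - v) ^ 2 / (2 * (u + v)) := by positivity
  rw [e1]
  rw [abs_le] at *
  constructor <;> linarith [havg.1, havg.2]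

lemma aux_grid (n : ℕ) (x : ℕ → ℝ) (hx : ∀ i, 1 ≤ i → i ≤ n - 1 → x i < x (i + 1)) :
    ∀ i j, 1 ≤ i → i ≤ j → j ≤ n → x i ≤ x j := by
  intro i j hi hij
  induction j, hij using Nat.le_induction with
  | base => intro _; exact le_rfl
  | succ j hj ih => intro hn; exact (ih (by omega)).trans (hx j (by omega) (by omega)).le

/-- (a) Brodlie's values satisfy `0 < ḟᵢ^B ≤ 3·min(mᵢ₋₁, mᵢ)` for increasing
data, so the resulting cubic Hermite interpolant is monotone;
(b) for data sampled from `f ∈ C³` with `f' ≥ δ > 0` the resulting piecewise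
cubic Hermite interpolant is third-order accurate on uniform grids and
second-order accurate on non-uniform grids. -/
theorem brodlie_monotone_and_accuracy :
    (∀ (n : ℕ) (x f df : ℕ → ℝ), 4 ≤ n →
      (∀ i, 1 ≤ i → i ≤ n - 1 → x i < x (i + 1)) →
      (∀ i, 1 ≤ i → i ≤ n - 1 → f i ≤ f (i + 1)) →
      (∀ i, 1 ≤ i → i ≤ n - 1 → 0 < (f (i + 1) - f i) / (x (i + 1) - x i)) →
      (∀ i, 2 ≤ i → i ≤ n - 1 →
        df i = brodlie (x i - x (i - 1)) (x (i + 1) - x i)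
          ((f i - f (i - 1)) / (x i - x (i - 1)))
          ((f (i + 1) - f i) / (x (i + 1) - x i))) →
      ((∀ i, 2 ≤ i → i ≤ n - 1 →
          0 < df i ∧ df i ≤ 3 * min ((f i - f (i - 1)) / (x i - x (i - 1)))
            ((f (i + 1) - f i) / (x (i + 1) - x i))) ∧
        (∀ i, 2 ≤ i → i ≤ n - 2 →
          MonotoneOn (hermite (x i) (x (i + 1)) (f i) (f (i + 1)) (df i) (df (i + 1)))
            (Set.Icc (x i) (x (i + 1)))))) ∧
    (∀ δ M : ℝ, 0 < δ → 0 ≤ M →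
      ∃ C > 0, ∀ (n : ℕ) (x : ℕ → ℝ) (f : ℝ → ℝ) (h hhat : ℝ) (df : ℕ → ℝ),
        4 ≤ n →
        (∀ i, 1 ≤ i → i ≤ n - 1 → x i < x (i + 1)) →
        (∀ i, 1 ≤ i → i ≤ n - 1 → x (i + 1) - x i ≤ hhat) →
        (∃ i, 1 ≤ i ∧ i ≤ n - 1 ∧ hhat = x (i + 1) - x i) →
        ContDiffOn ℝ 3 f (Set.Icc (x 1) (x n)) →
        (∀ t ∈ Set.Icc (x 1) (x n), δ ≤ derivWithin f (Set.Icc (x 1) (x n)) t) →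
        (∀ t ∈ Set.Icc (x 1) (x n),
          |iteratedDerivWithin 2 f (Set.Icc (x 1) (x n)) t| ≤ M) →
        (∀ t ∈ Set.Icc (x 1) (x n),
          |iteratedDerivWithin 3 f (Set.Icc (x 1) (x n)) t| ≤ M) →
        (∀ i, 2 ≤ i → i ≤ n - 1 →
          df i = brodlie (x i - x (i - 1)) (x (i + 1) - x i)
            ((f (x i) - f (x (i - 1))) / (x i - x (i - 1)))
            ((f (x (i + 1)) - f (x i)) / (x (i + 1) - x i))) →
        ((∀ i, 2 ≤ i → i ≤ n - 2 → ∀ t ∈ Set.Icc (x i) (x (i + 1)),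
            |hermite (x i) (x (i + 1)) (f (x i)) (f (x (i + 1))) (df i) (df (i + 1)) t
              - f t| ≤ C * hhat ^ 2) ∧
          ((∀ i, 1 ≤ i → i ≤ n - 1 → x (i + 1) - x i = h) →
            ∀ i, 2 ≤ i → i ≤ n - 2 → ∀ t ∈ Set.Icc (x i) (x (i + 1)),
              |hermite (x i) (x (i + 1)) (f (x i)) (f (x (i + 1))) (df i) (df (i + 1)) t
                - f t| ≤ C * h ^ 3))) := by
  constructor
  · intro n x f df hn hx hf hm hdf
    have A : ∀ i, 2 ≤ i → i ≤ n - 1 →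
          0 < df i ∧ df i ≤ 3 * min ((f i - f (i - 1)) / (x i - x (i - 1)))
            ((f (i + 1) - f i) / (x (i + 1) - x i)) := by
      intro i hi hin
      obtain ⟨j, rfl⟩ : ∃ j, i = j + 1 := ⟨i - 1, by omega⟩
      rw [hdf _ hi hin]
      simp only [Nat.add_sub_cancel]
      obtain ⟨h1, h2, h3, -, -⟩ := aux_brodlie_bounds (x (j + 1) - x j) (x (j + 1 + 1) - x (j + 1)) _ _
        (sub_pos.mpr (hx j (by omega) (by omega))) (sub_pos.mpr (hx (j + 1) (by omega) (by omega)))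
        (hm j (by omega) (by omega)) (hm (j + 1) (by omega) (by omega))
      refine ⟨h1, ?_⟩
      rcases min_choice ((f (j + 1) - f j) / (x (j + 1) - x j))
        ((f (j + 1 + 1) - f (j + 1)) / (x (j + 1 + 1) - x (j + 1))) with h | h <;> rw [h] <;> assumption
    refine ⟨A, fun i hi hin => ?_⟩
    have h1 := A i hi (by omega)
    have h2 := A (i + 1) (by omega) (by omega)
    simp only [Nat.add_sub_cancel] at h2
    refine aux_mono _ _ _ _ _ _ (hx i (by omega) (by omega)) (hm i (by omega) (by omega)) h1.1.le h2.1.le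
      (h1.2.trans ?_) (h2.2.trans ?_)
    · gcongr; exact min_le_right _ _
    · gcongr; exact min_le_left _ _
  · intro δ M hδ hM
    refine ⟨1 + 10 * M + (4 * (M + M ^ 2 / δ) + 5 * M), by positivity, ?_⟩
    intro n x f h hhat df hn hx hhle _ hf hfd hf2 hf3 hdf
    have hgrid := aux_grid n x hx
    have hmem : ∀ i, 1 ≤ i → i ≤ n → x i ∈ Set.Icc (x 1) (x n) := fun i h1 h2 =>
      ⟨hgrid 1 i le_rfl h1 h2, hgrid i n h1 h2 le_rfl⟩
    have hlt : x 1 < x n := (hx 1 le_rfl (by omega)).trans_le (hgrid 2 n (by omega) (by omega) le_rfl)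
    have hU := uniqueDiffOn_Icc hlt
    generalize hIdef : Set.Icc (x 1) (x n) = I at *
    have hI : I.OrdConnected := hIdef ▸ Set.ordConnected_Icc
    have D : ∀ k : ℕ, k < 3 → ∀ t ∈ I, HasDerivWithinAt (iteratedDerivWithin k f I)
        (iteratedDerivWithin (k + 1) f I t) I t := by
      intro k hk t ht
      rw [iteratedDerivWithin_succ]
      exact (hf.differentiableOn_iteratedDerivWithin (by exact_mod_cast hk) hU t ht).hasDerivWithinAt
    have D1 := D 0 (by norm_num)
    have D2 := D 1 (by norm_num)
    have D3 := D 2 (by norm_num)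
    simp only [zero_add, iteratedDerivWithin_zero] at D1
    norm_num only at D2 D3
    have hfd' : ∀ t ∈ I, δ ≤ iteratedDerivWithin 1 f I t := by
      intro t ht; rw [iteratedDerivWithin_one]; exact hfd t ht
    generalize iteratedDerivWithin 1 f I = g1 at *
    generalize iteratedDerivWithin 2 f I = g2 at *
    generalize iteratedDerivWithin 3 f I = g3 at *
    have T := aux_taylor_s18 I f g1 g2 g3 M hM D1 D2 D3 hf2 hf3
    have S := aux_slope I f g1 δ D1 hfd'
    have hH : 0 < hhat := by
      linarith [hx 1 le_rfl (by omega), hhle 1 le_rfl (by omega)]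
    -- consecutive slopes
    have hdiff : ∀ j, 1 ≤ j → j + 1 ≤ n - 1 → |(f (x (j + 1)) - f (x j)) / (x (j + 1) - x j)
        - (f (x (j + 1 + 1)) - f (x (j + 1))) / (x (j + 1 + 1) - x (j + 1))| ≤ 2 * M * hhat := by
      intro j hj hjn
      have l1 := hx j hj (by omega)
      have l2 := hx (j + 1) (by omega) hjn
      have m0 := hmem j hj (by omega)
      have m1 := hmem (j + 1) (by omega) (by omega)
      have m2 := hmem (j + 1 + 1) (by omega) (by omega)
      have e1 := aux_slope_err (f (x (j + 1))) (f (x j)) (g1 (x (j + 1))) (x (j + 1)) (x j) M hhat l1.ne' hM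
        (by rw [abs_sub_comm, abs_of_pos (by linarith)]; exact hhle j hj (by omega)) (T _ _ m1 m0).1
      have e2 := aux_slope_err (f (x (j + 1))) (f (x (j + 1 + 1))) (g1 (x (j + 1))) (x (j + 1))
        (x (j + 1 + 1)) M hhat l2.ne hM
        (by rw [abs_of_pos (by linarith)]; exact hhle (j + 1) (by omega) (by omega)) (T _ _ m1 m2).1
      rw [← neg_sub (f (x (j + 1))) (f (x j)), ← neg_sub (x (j + 1)) (x j), neg_div_neg_eq] at e1
      rw [abs_le] at *
      constructor <;> linarith [e1.1, e1.2, e2.1, e2.2]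
    have hB : ∀ j, 1 ≤ j → j + 1 ≤ n - 1 →
        |df (j + 1) - (f (x (j + 1)) - f (x j)) / (x (j + 1) - x j)| ≤ 2 * M * hhat ∧
        |df (j + 1) - (f (x (j + 1 + 1)) - f (x (j + 1))) / (x (j + 1 + 1) - x (j + 1))|
          ≤ 2 * M * hhat := by
      intro j hj hjn
      have l1 := hx j hj (by omega)
      have l2 := hx (j + 1) (by omega) hjn
      have m0 := hmem j hj (by omega)
      have m1 := hmem (j + 1) (by omega) (by omega)
      have m2 := hmem (j + 1 + 1) (by omega) (by omega)
      have := aux_brodlie_bounds (x (j + 1) - x j) (x (j + 1 + 1) - x (j + 1)) _ _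
        (sub_pos.mpr l1) (sub_pos.mpr l2) (hδ.trans_le (S _ _ l1 m0 m1)) (hδ.trans_le (S _ _ l2 m1 m2))
      rw [hdf (j + 1) (by omega) hjn]
      simp only [Nat.add_sub_cancel]
      exact ⟨this.2.2.2.1.trans (hdiff j hj hjn), this.2.2.2.2.trans (hdiff j hj hjn)⟩
    refine ⟨?_, ?_⟩
    · intro i hi hin t ht
      obtain ⟨j, rfl⟩ : ∃ j, i = j + 1 := ⟨i - 1, by omega⟩
      have l2 := hx (j + 1) (by omega) (by omega)
      have m1 := hmem (j + 1) (by omega) (by omega)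
      have m2 := hmem (j + 1 + 1) (by omega) (by omega)
      have mt : t ∈ I := hI.out m1 m2 ht
      have := aux_second (x (j + 1)) (x (j + 1 + 1)) (f (x (j + 1))) (f (x (j + 1 + 1))) (f t)
        (df (j + 1)) (df (j + 1 + 1)) (g1 (x (j + 1))) t M hhat l2 ht hM
        (hhle (j + 1) (by omega) (by omega))
        (T _ _ m1 m2).1 (T _ _ m1 mt).1 (hB j (by omega) (by omega)).2
        (hB (j + 1) (by omega) (by omega)).1
      refine this.trans ?_
      gcongr
      have : 0 ≤ M ^ 2 / δ := by positivity
      linarith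
    · intro hu i hi hin t ht
      have hhh : hhat = h := by
        rename_i hex
        obtain ⟨k, k1, k2, k3⟩ := hex
        rw [k3, hu k k1 k2]
      subst hhh
      have hE : ∀ j, 1 ≤ j → j + 1 ≤ n - 1 →
          |df (j + 1) - g1 (x (j + 1))| ≤ (M + M ^ 2 / δ) * hhat ^ 2 := by
        intro j hj hjn
        have l1 := hx j hj (by omega)
        have l2 := hx (j + 1) (by omega) hjn
        have m0 := hmem j hj (by omega)
        have m1 := hmem (j + 1) (by omega) (by omega)
        have m2 := hmem (j + 1 + 1) (by omega) (by omega)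
        have u1 := hu j hj (by omega)
        have u2 := hu (j + 1) (by omega) hjn
        have u1' : x j - x (j + 1) = -hhat := by linarith
        have s1 := S _ _ l1 m0 m1
        have s2 := S _ _ l2 m1 m2
        have t1 := (T _ _ m1 m0).2.2
        have t2 := (T _ _ m1 m2).2.2
        have hd := hdiff j hj hjn
        rw [hdf (j + 1) (by omega) hjn]
        simp only [Nat.add_sub_cancel]
        rw [u1'] at t1
        rw [u2] at t2 s2 hd ⊢
        rw [u1] at s1 hd ⊢
        rw [abs_neg, abs_of_pos hH] at t1
        rw [abs_of_pos hH] at t2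
        exact aux_deriv hhat _ _ _ _ _ M δ hH hδ hM t1 t2 s1 s2 hd
      obtain ⟨j, rfl⟩ : ∃ j, i = j + 1 := ⟨i - 1, by omega⟩
      have l2 := hx (j + 1) (by omega) (by omega)
      have m1 := hmem (j + 1) (by omega) (by omega)
      have m2 := hmem (j + 1 + 1) (by omega) (by omega)
      have mt : t ∈ I := hI.out m1 m2 ht
      have u2 := hu (j + 1) (by omega) (by omega)
      have := aux_third (x (j + 1)) (x (j + 1 + 1)) (f (x (j + 1))) (f (x (j + 1 + 1))) (f t)
        (df (j + 1)) (df (j + 1 + 1)) (g1 (x (j + 1))) (g1 (x (j + 1 + 1))) (g2 (x (j + 1))) t M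
        (M + M ^ 2 / δ) l2 ht hM
        (T _ _ m1 m2).2.2 (T _ _ m1 m2).2.1 (T _ _ m1 mt).2.2
        (by rw [u2]; exact hE j (by omega) (by omega))
        (by rw [u2]; exact hE (j + 1) (by omega) (by omega))
      rw [u2] at this
      refine this.trans ?_
      have : 0 ≤ hhat ^ 3 := by positivity
      nlinarith [mul_nonneg hM this]
end
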